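/- Let R₃ be the unique positive root of R⁶+R⁵−4R⁴−8R³−10R²−6R−2 = 0 (R₃ ≈ 2.553), and suppose the step ratios satisfy 0 < r_k ≤ R' for all k ≥ 2, for some fixed R' < R₃. Let ϑ^{(3,n)}_{n−j} be the DOC kernels associated with the BDF3 kernels d^{(3,n)}_j = d_j(r_n, r_{n−1}) for j = 0,1,2 and d^{(3,n)}_j = 0 for j ≥ 3, defined by ϑ^{(3,n)}_0 = 1/d^{(3,n)}_0 and ϑ^{(3,n)}_{n−j} = −(1/d^{(3,j)}_0)·Σ_{i=j+1}^{n} ϑ^{(3,n)}_{n−i} d^{(3,i)}_{i−j} for 3 ≤ j ≤ n−1. Then there exists a constant C₃ > 0, depending only on R' and independent of n, such that Σ_{j=3}^{n} |ϑ^{(3,n)}_{n−j}| ≤ C₃ for all n ≥ 3, and Σ_{j=i}^{n} |ϑ^{(3,j)}_{j−i}| ≤ C₃ for all n ≥ i ≥ 3. -/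

import Mathlib

/-- BDF coefficient function `d₀(x,y)`. -/
noncomputable def d0 (x y : ℝ) : ℝ := (1 + 2*x)/(1 + x) + x*y/(1 + y + x*y)

/-- BDF coefficient function `d₁(x,y)`. -/
noncomputable def d1 (x y : ℝ) : ℝ :=
  -(x/(1 + x)) - x*y/(1 + y + x*y) - (x*y^2/(1 + y + x*y)) * ((1 + x)/(1 + y))

/-- BDF coefficient function `d₂(x,y)`. -/
noncomputable def d2 (x y : ℝ) : ℝ := (x*y^2/(1 + y + x*y)) * ((1 + x)/(1 + y))

/-- The BDF3 kernels `d^{(3,n)}_j = d_j(r_n, r_{n-1})` for `j = 0,1,2`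
and `d^{(3,n)}_j = 0` for `j ≥ 3`. -/
noncomputable def dk3 (r : ℕ → ℝ) (n j : ℕ) : ℝ :=
  if j = 0 then d0 (r n) (r (n - 1))
  else if j = 1 then d1 (r n) (r (n - 1))
  else if j = 2 then d2 (r n) (r (n - 1))
  else 0

/-!
The DOC kernels `ϑ` are the entries of the inverse of a lower triangular matrix `D` with three
nonzero diagonals. They are defined by `ϑ D = 1`; since also `D ϑ = 1`, every column of `ϑ` solves
the homogeneous BDF3 recurrence `d₀ w + d₁ v + d₂ u = 0`. Because `d₀ + d₁ + d₂ = 1`, this reads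
`d₀ (w - v) = d₂ (v - u) - v`, and for such solutions the energy `v² + 2y/(1+y) (v - u)²`
contracts by a fixed factor as long as `d₂² / ((2d₀ - 1 - 2x/(1+x)) · 2y/(1+y))` stays below `1`.
That quotient increases with both ratios, so it only has to be examined at `x = y = R`, where it is
below `1` exactly when `R⁶ + R⁵ - 6R⁴ - 8R³ - 10R² - 4R - 2 < 0`. Hence `|ϑ n j|` decays
geometrically in `n - j`, which bounds row sums and column sums alike.
-/

open Finset

/-- Discrete orthogonal convolution (DOC) kernels with indices from `m` on: `d n k` is the kernel
`d^{(n)}_k`, while `ϑ n j` stands for `ϑ^{(n)}_{n-j}`, so that the second index of `ϑ` is the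
column of the matrix inverse, not the offset from the diagonal. -/
structure IsDOCKernel {K : Type*} [Field K] (m : ℕ) (d ϑ : ℕ → ℕ → K) : Prop where
  diag : ∀ n, m ≤ n → ϑ n n = 1 / d n 0
  offDiag : ∀ n j, m ≤ j → j < n →
    ϑ n j = -(1 / d j 0) * ∑ i ∈ Icc (j + 1) n, ϑ n i * d i (i - j)

/-- The quantity `d₂² / ((2d₀ - 1 - 2x/(1+x)) · 2y/(1+y))` whose size decides whether the BDF3
energy contracts, written as a product of factors increasing in `x` and `y`. -/
noncomputable def bdf3StabilityRatio (x y : ℝ) : ℝ :=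
  (1 + x) ^ 2 / 2 * (y / (1 + y)) * (x * y / (1 + y + x * y)) * (x * y / (1 + y + 3 * (x * y)))

/-- The Lyapunov function of the BDF3 recurrence at two consecutive values `u`, `v`, where `y` is
the step ratio belonging to `v`. -/
noncomputable def bdf3Energy (y u v : ℝ) : ℝ := v ^ 2 + 2 * y / (1 + y) * (v - u) ^ 2

theorem sum_Icc_mul_eq_ite_comm {α A : Type*} [PartialOrder α] [LocallyFiniteOrder α]
    [DecidableEq α] [CommRing A] {a b : α → α → A} {j n : α} (hjn : j ≤ n)
    (h : ∀ p q, j ≤ q → q ≤ p → p ≤ n → ∑ i ∈ Icc q p, a p i * b i q = if p = q then 1 else 0) :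
    ∑ i ∈ Icc j n, b n i * a i j = if n = j then 1 else 0 := by
  classical
  let lower (c : α → α → A) : Matrix (Icc j n) (Icc j n) A :=
    Matrix.of fun p q => if q ≤ p then c p q else 0
  have lower_mul_apply (c e : α → α → A) (p q : Icc j n) :
      (lower c * lower e) p q = ∑ i ∈ Icc q.1 p.1, c p i * e i q := by
    have hsub : Icc q.1 p.1 ⊆ Icc j n := Icc_subset_Icc (mem_Icc.1 q.2).1 (mem_Icc.1 p.2).2
    calc (lower c * lower e) p q
        = ∑ i ∈ Icc j n, if i ∈ Icc q.1 p.1 then c p i * e i q else 0 := by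
          rw [Matrix.mul_apply, ← sum_coe_sort (Icc j n)]
          refine sum_congr rfl fun i _ => ?_
          simp only [lower, Matrix.of_apply, mem_Icc, ← Subtype.coe_le_coe]
          split_ifs <;> simp_all
      _ = ∑ i ∈ Icc q.1 p.1, c p i * e i q := by
          rw [sum_ite_mem, inter_eq_right.2 hsub]
  have lower_mul_eq_one : lower a * lower b = 1 := by
    ext p q
    rw [lower_mul_apply, Matrix.one_apply]
    by_cases hqp : q ≤ p
    · rw [h p q (mem_Icc.1 q.2).1 hqp (mem_Icc.1 p.2).2]
      simp only [Subtype.coe_inj]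
    · rw [Icc_eq_empty (Subtype.coe_le_coe.not.2 hqp), sum_empty, if_neg fun hpq => hqp hpq.ge]
  have hentry := lower_mul_apply b a ⟨n, right_mem_Icc.2 hjn⟩ ⟨j, left_mem_Icc.2 hjn⟩
  rw [mul_eq_one_comm.1 lower_mul_eq_one, Matrix.one_apply] at hentry
  simpa using hentry.symm

namespace IsDOCKernel

variable {K : Type*} [Field K] {m n j : ℕ} {d ϑ : ℕ → ℕ → K}

theorem sum_mul_kernel_eq_ite (h : IsDOCKernel m d ϑ) (hd : ∀ i, m ≤ i → d i 0 ≠ 0)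
    (hj : m ≤ j) (hjn : j ≤ n) :
    ∑ i ∈ Icc j n, ϑ n i * d i (i - j) = if n = j then 1 else 0 := by
  have hdj := hd j hj
  rcases hjn.eq_or_lt with rfl | hlt
  · simp [h.diag j hj, hdj]
  · rw [← add_sum_Ioc_eq_sum_Icc hjn, ← Icc_add_one_left_eq_Ioc, h.offDiag n j hj hlt,
      Nat.sub_self, if_neg hlt.ne']
    field_simp
    ring

theorem sum_kernel_mul_eq_ite (h : IsDOCKernel m d ϑ) (hd : ∀ i, m ≤ i → d i 0 ≠ 0)
    (hj : m ≤ j) (hjn : j ≤ n) :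
    ∑ i ∈ Icc j n, d n (n - i) * ϑ i j = if n = j then 1 else 0 :=
  sum_Icc_mul_eq_ite_comm (a := ϑ) (b := fun i j => d i (i - j)) hjn
    fun _ _ hjq hqp _ => h.sum_mul_kernel_eq_ite hd (hj.trans hjq) hqp

theorem two_term_recurrence (h : IsDOCKernel m d ϑ) (hd : ∀ i, m ≤ i → d i 0 ≠ 0) (hj : m ≤ j) :
    d (j + 1) 0 * ϑ (j + 1) j + d (j + 1) 1 * ϑ j j = 0 := by
  have hsum := h.sum_kernel_mul_eq_ite hd hj j.le_succ
  rw [sum_Icc_succ_top j.le_succ] at hsum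
  simpa [add_comm] using hsum

theorem three_term_recurrence (h : IsDOCKernel m d ϑ) (hd : ∀ i, m ≤ i → d i 0 ≠ 0)
    (hd3 : ∀ i k, 3 ≤ k → d i k = 0) (hj : m ≤ j) (k : ℕ) :
    d (j + k + 2) 0 * ϑ (j + k + 2) j + d (j + k + 2) 1 * ϑ (j + k + 1) j
      + d (j + k + 2) 2 * ϑ (j + k) j = 0 := by
  have hsum := h.sum_kernel_mul_eq_ite hd hj (n := j + k + 2) (by omega)
  have hsub : Icc (j + k) (j + k + 2) ⊆ Icc j (j + k + 2) :=
    Icc_subset_Icc_left (Nat.le_add_right j k)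
  rw [if_neg (by omega), ← sum_subset hsub, sum_Icc_succ_top (by omega),
    sum_Icc_succ_top (by omega), Icc_self, sum_singleton] at hsum
  · rw [show j + k + 2 - (j + k) = 2 by omega, show j + k + 2 - (j + k + 1) = 1 by omega,
      show j + k + 2 - (j + k + 1 + 1) = 0 by omega] at hsum
    linear_combination hsum
  · intro i hi hi'
    rw [mem_Icc] at hi hi'
    rw [hd3 _ _ (by omega), zero_mul]

end IsDOCKernel

theorem sum_pow_le_inv_one_sub {ι : Type*} {q : ℝ} (hq0 : 0 ≤ q) (hq1 : q < 1) {s : Finset ι}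
    {e : ι → ℕ} (he : Set.InjOn e s) : ∑ i ∈ s, q ^ e i ≤ (1 - q)⁻¹ := by
  classical
  rw [← sum_image (f := fun k => q ^ k) he, ← tsum_geometric_of_lt_one hq0 hq1]
  exact (summable_geometric_of_lt_one hq0 hq1).sum_le_tsum _ fun k _ => pow_nonneg hq0 k

theorem sum_abs_le_of_abs_le_geometric {ι : Type*} {C q : ℝ} (hC : 0 ≤ C) (hq0 : 0 ≤ q)
    (hq1 : q < 1) {s : Finset ι} {f : ι → ℝ} {e : ι → ℕ} (he : Set.InjOn e s)
    (hf : ∀ i ∈ s, |f i| ≤ C * q ^ e i) : ∑ i ∈ s, |f i| ≤ C * (1 - q)⁻¹ :=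
  calc ∑ i ∈ s, |f i| ≤ ∑ i ∈ s, C * q ^ e i := sum_le_sum hf
    _ = C * ∑ i ∈ s, q ^ e i := (mul_sum ..).symm
    _ ≤ C * (1 - q)⁻¹ := by gcongr; exact sum_pow_le_inv_one_sub hq0 hq1 he

theorem mul_energy_le_sq_mul_energy_drop {a b f g ε u v w : ℝ} (hε : 0 ≤ ε) (hεa : ε ≤ a ^ 2)
    (hf : 0 ≤ f) (hεf : ε < 2 * a - 1 - f) (hb : b ^ 2 ≤ (2 * a - 1 - f - ε) * g)
    (hw : a * w = b * v - u) :
    ε * (u ^ 2 + g * v ^ 2) ≤ a ^ 2 * (u ^ 2 + g * v ^ 2 - ((u + w) ^ 2 + f * w ^ 2)) := by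
  set T := 2 * a - 1 - f - ε with hT
  have hTpos : 0 < T := by linarith
  have elim_w : a ^ 2 * (u ^ 2 + g * v ^ 2 - ((u + w) ^ 2 + f * w ^ 2)) =
      a ^ 2 * (u ^ 2 + g * v ^ 2) - ((a * u + (b * v - u)) ^ 2 + f * (b * v - u) ^ 2) := by
    rw [← hw]; ring
  have complete_square :
      T * (a ^ 2 * (u ^ 2 + g * v ^ 2 - ((u + w) ^ 2 + f * w ^ 2)) - ε * (u ^ 2 + g * v ^ 2)) =
        (T * u - b * (a - 1 - f) * v) ^ 2
          + v ^ 2 * ((a ^ 2 - ε) * (T * g - b ^ 2) + ε * f * b ^ 2) := by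
    rw [elim_w, hT]; ring
  have hmargin : 0 ≤ (a ^ 2 - ε) * (T * g - b ^ 2) + ε * f * b ^ 2 :=
    add_nonneg (mul_nonneg (sub_nonneg.2 hεa) (sub_nonneg.2 hb)) (by positivity)
  refine sub_nonneg.1 (nonneg_of_mul_nonneg_right ?_ hTpos)
  rw [complete_square]
  exact add_nonneg (sq_nonneg _) (mul_nonneg (sq_nonneg v) hmargin)

section Coefficients

variable {x y : ℝ}

theorem one_le_d0 (hx : 0 ≤ x) (hy : 0 ≤ y) : 1 ≤ d0 x y := by
  have hfirst : 1 ≤ (1 + 2 * x) / (1 + x) := by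
    rw [one_le_div (by positivity)]; linarith
  have hsecond : 0 ≤ x * y / (1 + y + x * y) := by positivity
  unfold d0
  linarith

theorem d0_le_three (hx : 0 ≤ x) (hy : 0 ≤ y) : d0 x y ≤ 3 := by
  have hfirst : (1 + 2 * x) / (1 + x) ≤ 2 := by
    rw [div_le_iff₀ (by positivity)]; linarith
  have hsecond : x * y / (1 + y + x * y) ≤ 1 :=
    div_le_one_of_le₀ (by linarith) (by positivity)
  unfold d0
  linarith

theorem d0_add_d1_add_d2 (hx : 0 ≤ x) : d0 x y + d1 x y + d2 x y = 1 := by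
  have h : (1 + 2 * x) / (1 + x) - x / (1 + x) = 1 := by
    field_simp; ring
  unfold d0 d1 d2
  linarith

theorem two_mul_d0_sub (hx : 0 ≤ x) (hy : 0 ≤ y) :
    2 * d0 x y - 1 - 2 * x / (1 + x) = 1 + 2 * (x * y / (1 + y + x * y)) := by
  unfold d0
  field_simp
  ring

theorem d2_sq_eq (hx : 0 ≤ x) (hy : 0 ≤ y) :
    d2 x y ^ 2 =
      bdf3StabilityRatio x y * (2 * d0 x y - 1 - 2 * x / (1 + x)) * (2 * y / (1 + y)) := by
  have hsum : 1 + 2 * (x * y / (1 + y + x * y)) = (1 + y + 3 * (x * y)) / (1 + y + x * y) := by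
    field_simp
    ring
  rw [two_mul_d0_sub hx hy, hsum]
  unfold d2 bdf3StabilityRatio
  field_simp

theorem bdf3StabilityRatio_nonneg (hx : 0 ≤ x) (hy : 0 ≤ y) : 0 ≤ bdf3StabilityRatio x y := by
  unfold bdf3StabilityRatio
  positivity

theorem mul_div_one_add_add_le {c x y R : ℝ} (hc : 0 ≤ c) (hx : 0 ≤ x) (hy : 0 ≤ y) (hxR : x ≤ R)
    (hyR : y ≤ R) : x * y / (1 + y + c * (x * y)) ≤ R * R / (1 + R + c * (R * R)) := by
  have hR : 0 ≤ R := hx.trans hxR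
  have hxy : x * y ≤ R * R := by gcongr
  have hxyR : x * (y * R) ≤ R * (y * R) := by gcongr
  rw [div_le_div_iff₀ (by positivity) (by positivity)]
  linarith

theorem bdf3StabilityRatio_le_diagonal {R : ℝ} (hx : 0 ≤ x) (hy : 0 ≤ y) (hxR : x ≤ R)
    (hyR : y ≤ R) : bdf3StabilityRatio x y ≤ bdf3StabilityRatio R R := by
  have hR : 0 ≤ R := hx.trans hxR
  have hfirst : y / (1 + y) ≤ R / (1 + R) := by
    rw [div_le_div_iff₀ (by positivity) (by positivity)]
    linarith
  have hsecond := mul_div_one_add_add_le zero_le_one hx hy hxR hyR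
  have hthird := mul_div_one_add_add_le zero_le_three hx hy hxR hyR
  simp only [one_mul] at hsecond
  unfold bdf3StabilityRatio
  gcongr

theorem bdf3StabilityRatio_diagonal_lt_one {R : ℝ} (hR : 0 ≤ R)
    (hpoly : R ^ 6 + R ^ 5 - 6 * R ^ 4 - 8 * R ^ 3 - 10 * R ^ 2 - 4 * R - 2 < 0) :
    bdf3StabilityRatio R R < 1 := by
  have hdiag : bdf3StabilityRatio R R =
      (R ^ 6 + R ^ 5) / (2 * ((1 + R + R * R) * (1 + R + 3 * (R * R)))) := by
    unfold bdf3StabilityRatio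
    field_simp
    ring
  rw [hdiag, div_lt_one (by positivity)]
  linarith

end Coefficients

theorem bdf3Energy_le_mul_bdf3Energy {x y ε u v w : ℝ} (hx : 0 ≤ x) (hy : 0 ≤ y) (hε : 0 ≤ ε)
    (hε1 : ε < 1) (hratio : bdf3StabilityRatio x y ≤ 1 - ε)
    (hrec : d0 x y * w + d1 x y * v + d2 x y * u = 0) :
    bdf3Energy x v w ≤ (1 - ε / 9) * bdf3Energy y u v := by
  set S := 2 * d0 x y - 1 - 2 * x / (1 + x) with hS
  have one_le_S : 1 ≤ S := by
    rw [hS, two_mul_d0_sub hx hy]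
    exact le_add_of_nonneg_right (by positivity)
  have hd0 := one_le_d0 hx hy
  have hd2 : d2 x y ^ 2 ≤ (S - ε) * (2 * y / (1 + y)) :=
    calc d2 x y ^ 2 = bdf3StabilityRatio x y * S * (2 * y / (1 + y)) := d2_sq_eq hx hy
      _ ≤ (1 - ε) * S * (2 * y / (1 + y)) := by gcongr
      _ ≤ (S - ε) * (2 * y / (1 + y)) := by gcongr; nlinarith
  have hdiff : d0 x y * (w - v) = d2 x y * (v - u) - v := by
    linear_combination hrec - v * d0_add_d1_add_d2 (y := y) hx
  have hnonneg : 0 ≤ bdf3Energy y u v := by unfold bdf3Energy; positivity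
  have hdrop : ε * bdf3Energy y u v ≤ d0 x y ^ 2 * (bdf3Energy y u v - bdf3Energy x v w) := by
    simpa only [bdf3Energy, add_sub_cancel] using
      mul_energy_le_sq_mul_energy_drop hε (by nlinarith) (by positivity) (by linarith) hd2 hdiff
  have hd0_sq : d0 x y ^ 2 ≤ 9 := by nlinarith [d0_le_three hx hy]
  have drop_nonneg : 0 ≤ bdf3Energy y u v - bdf3Energy x v w :=
    nonneg_of_mul_nonneg_right ((mul_nonneg hε hnonneg).trans hdrop) (by positivity)
  linarith [mul_le_mul_of_nonneg_right hd0_sq drop_nonneg]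

theorem abs_le_geometric_of_bdf3_recurrence {r u : ℕ → ℝ} {ε : ℝ} (hr : ∀ k, 0 ≤ r k) (hε : 0 ≤ ε)
    (hε1 : ε < 1) (hratio : ∀ k, bdf3StabilityRatio (r (k + 1)) (r k) ≤ 1 - ε) (hu0 : u 0 = 0)
    (hrec : ∀ k, d0 (r (k + 1)) (r k) * u (k + 2) + d1 (r (k + 1)) (r k) * u (k + 1)
      + d2 (r (k + 1)) (r k) * u k = 0) (k : ℕ) :
    |u (k + 1)| ≤ 2 * (1 - ε / 18) ^ k * |u 1| := by
  have hr0 := hr 0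
  have hrk := hr k
  have hinitial : bdf3Energy (r 0) (u 0) (u 1) ≤ 3 * u 1 ^ 2 := by
    have hweight : 2 * r 0 / (1 + r 0) ≤ 2 := by
      rw [div_le_iff₀ (by positivity)]; linarith
    rw [bdf3Energy, hu0, sub_zero]
    linarith [mul_le_mul_of_nonneg_right hweight (sq_nonneg (u 1))]
  have hdecay : bdf3Energy (r k) (u k) (u (k + 1)) ≤
      (1 - ε / 9) ^ k * bdf3Energy (r 0) (u 0) (u 1) :=
    le_geom (u := fun k => bdf3Energy (r k) (u k) (u (k + 1))) (by linarith) k fun i _ =>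
      bdf3Energy_le_mul_bdf3Energy (hr _) (hr _) hε hε1 (hratio i) (hrec i)
  have hbase : 1 - ε / 9 ≤ (1 - ε / 18) ^ 2 := by nlinarith [sq_nonneg ε]
  have hbase_nonneg : 0 ≤ 1 - ε / 9 := by linarith
  have hrate_nonneg : 0 ≤ 1 - ε / 18 := by linarith
  refine abs_le_of_sq_le_sq ?_ (by positivity)
  calc u (k + 1) ^ 2 ≤ bdf3Energy (r k) (u k) (u (k + 1)) :=
        le_add_of_nonneg_right (by positivity)
    _ ≤ (1 - ε / 9) ^ k * (3 * u 1 ^ 2) := hdecay.trans (by gcongr)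
    _ ≤ ((1 - ε / 18) ^ 2) ^ k * (4 * u 1 ^ 2) := by gcongr; norm_num
    _ = (2 * (1 - ε / 18) ^ k * |u 1|) ^ 2 := by
        rw [mul_pow, mul_pow, sq_abs, pow_right_comm]; ring

theorem abs_docKernel_le_geometric {r : ℕ → ℝ} {ϑ : ℕ → ℕ → ℝ} {ε : ℝ} (hr : ∀ k, 2 ≤ k → 0 ≤ r k)
    (hε : 0 ≤ ε) (hε1 : ε < 1)
    (hratio : ∀ k, 3 ≤ k → bdf3StabilityRatio (r (k + 1)) (r k) ≤ 1 - ε)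
    (hϑ : IsDOCKernel 3 (dk3 r) ϑ) {n j : ℕ} (hj : 3 ≤ j) (hjn : j ≤ n) :
    |ϑ n j| ≤ 2 * (1 - ε / 18) ^ (n - j) := by
  obtain ⟨k, rfl⟩ := Nat.exists_eq_add_of_le hjn
  have one_le_diag (i : ℕ) (hi : 3 ≤ i) : 1 ≤ dk3 r i 0 := by
    simpa [dk3] using one_le_d0 (hr i (by omega)) (hr (i - 1) (by omega))
  have diag_ne_zero (i : ℕ) (hi : 3 ≤ i) : dk3 r i 0 ≠ 0 := by
    linarith [one_le_diag i hi]
  have band (i k : ℕ) (hk : 3 ≤ k) : dk3 r i k = 0 := by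
    simp [dk3, show k ≠ 0 by omega, show k ≠ 1 by omega, show k ≠ 2 by omega]
  -- Prepending `ϑ (j - 1) j = 0` lets the column obey the three-term recurrence from its start.
  let column : ℕ → ℝ
    | 0 => 0
    | i + 1 => ϑ (j + i) j
  have hcolumn (i : ℕ) : d0 (r (j + (i + 1))) (r (j + i)) * column (i + 2)
      + d1 (r (j + (i + 1))) (r (j + i)) * column (i + 1)
      + d2 (r (j + (i + 1))) (r (j + i)) * column i = 0 := by
    cases i with
    | zero => simpa [column, dk3] using hϑ.two_term_recurrence diag_ne_zero hj
    | succ i =>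
      simpa [column, dk3, ← add_assoc] using hϑ.three_term_recurrence diag_ne_zero band hj i
  have hdiag : |ϑ j j| ≤ 1 := by
    have hpos := one_pos.trans_le (one_le_diag j hj)
    rw [hϑ.diag j hj, abs_of_pos (one_div_pos.2 hpos), div_le_one hpos]
    exact one_le_diag j hj
  have hq : 0 ≤ 1 - ε / 18 := by linarith
  calc |ϑ (j + k) j| ≤ 2 * (1 - ε / 18) ^ k * |ϑ j j| :=
        abs_le_geometric_of_bdf3_recurrence (r := fun i => r (j + i)) (u := column)
          (fun i => hr _ (by omega)) hε hε1 (fun i => hratio (j + i) (by omega)) rfl hcolumn k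
    _ ≤ 2 * (1 - ε / 18) ^ (j + k - j) := by
        rw [Nat.add_sub_cancel_left]
        exact mul_le_of_le_one_right (by positivity) hdiag

theorem bdf3_doc_bounded_general {R : ℝ} (hR : 0 < R)
    (hpoly : R ^ 6 + R ^ 5 - 6 * R ^ 4 - 8 * R ^ 3 - 10 * R ^ 2 - 4 * R - 2 < 0) :
    ∃ C : ℝ, 0 < C ∧ ∀ r : ℕ → ℝ, (∀ k, 2 ≤ k → 0 < r k ∧ r k ≤ R) →
      ∀ ϑ : ℕ → ℕ → ℝ, IsDOCKernel 3 (dk3 r) ϑ →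
        (∀ n, ∑ j ∈ Icc 3 n, |ϑ n j| ≤ C) ∧
        (∀ n i, 3 ≤ i → ∑ j ∈ Icc i n, |ϑ j i| ≤ C) := by
  set ε := 1 - bdf3StabilityRatio R R with hε
  have hε0 : 0 < ε := sub_pos.2 (bdf3StabilityRatio_diagonal_lt_one hR.le hpoly)
  have hε1 : ε < 1 := by unfold ε bdf3StabilityRatio; exact sub_lt_self 1 (by positivity)
  have hq0 : 0 ≤ 1 - ε / 18 := by linarith
  have hq1 : 1 - ε / 18 < 1 := by linarith
  refine ⟨2 * (1 - (1 - ε / 18))⁻¹, mul_pos two_pos (inv_pos.2 (sub_pos.2 hq1)), ?_⟩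
  intro r hr ϑ hϑ
  have hratio (k : ℕ) (hk : 3 ≤ k) : bdf3StabilityRatio (r (k + 1)) (r k) ≤ 1 - ε := by
    have hx := hr (k + 1) (by omega)
    have hy := hr k (by omega)
    simpa [hε] using bdf3StabilityRatio_le_diagonal hx.1.le hy.1.le hx.2 hy.2
  have hdecay {n j : ℕ} (hj : 3 ≤ j) (hjn : j ≤ n) : |ϑ n j| ≤ 2 * (1 - ε / 18) ^ (n - j) :=
    abs_docKernel_le_geometric (fun k hk => (hr k hk).1.le) hε0.le hε1 hratio hϑ hj hjn
  constructor
  · intro n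
    refine sum_abs_le_of_abs_le_geometric two_pos.le hq0 hq1 (e := fun j => n - j) ?_ ?_
    · intro i hi j hj hij
      simp only [coe_Icc, Set.mem_Icc] at hi hj hij
      omega
    · intro j hj
      exact hdecay (mem_Icc.1 hj).1 (mem_Icc.1 hj).2
  · intro n i hi
    refine sum_abs_le_of_abs_le_geometric two_pos.le hq0 hq1 (e := fun j => j - i) ?_ ?_
    · intro j hj k hk hjk
      simp only [coe_Icc, Set.mem_Icc] at hj hk hjk
      omega
    · intro j hj
      exact hdecay hi (mem_Icc.1 hj).1

theorem one_lt_of_bdf3_root {R : ℝ} (hR : 0 < R)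
    (hroot : R ^ 6 + R ^ 5 - 4 * R ^ 4 - 8 * R ^ 3 - 10 * R ^ 2 - 6 * R - 2 = 0) : 1 < R := by
  by_contra! hR1
  have h6 : R ^ 6 ≤ R ^ 4 := pow_le_pow_of_le_one hR.le hR1 (by norm_num)
  have h5 : R ^ 5 ≤ R ^ 4 := pow_le_pow_of_le_one hR.le hR1 (by norm_num)
  have h4 : 0 < R ^ 4 := by positivity
  have h3 : 0 < R ^ 3 := by positivity
  have h2 : 0 < R ^ 2 := by positivity
  linarith

/-- Uniform boundedness of the BDF3 DOC kernels (Lemma 3.1): if all step ratios satisfy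
`0 < r_k ≤ R' < R₃`, where `R₃` is the unique positive root of
`R⁶+R⁵-4R⁴-8R³-10R²-6R-2 = 0`, then there is a constant `C₃ > 0` depending only on `R'`
(independent of `n`) such that, writing `ϑ n j` for `ϑ^{(3,n)}_{n-j}`,
`Σ_{j=3}^n |ϑ^{(3,n)}_{n-j}| ≤ C₃` for all `n ≥ 3` and
`Σ_{j=i}^n |ϑ^{(3,j)}_{j-i}| ≤ C₃` for all `n ≥ i ≥ 3`. -/
theorem bdf3_doc_bounded (R' R3 : ℝ) (hR3pos : 0 < R3)
    (hR3root : R3^6 + R3^5 - 4*R3^4 - 8*R3^3 - 10*R3^2 - 6*R3 - 2 = 0)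
    (hR3uniq : ∀ x : ℝ, 0 < x → x^6 + x^5 - 4*x^4 - 8*x^3 - 10*x^2 - 6*x - 2 = 0 → x = R3)
    (hR' : R' < R3) :
    ∃ C3 : ℝ, 0 < C3 ∧
      ∀ (r : ℕ → ℝ), (∀ k, 2 ≤ k → 0 < r k ∧ r k ≤ R') →
      ∀ (ϑ : ℕ → ℕ → ℝ),
        (∀ n, 3 ≤ n → ϑ n n = 1 / dk3 r n 0) →
        (∀ n j, 3 ≤ j → j < n →
          ϑ n j = -(1 / dk3 r j 0) * ∑ i ∈ Finset.Icc (j+1) n, ϑ n i * dk3 r i (i - j)) →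
        (∀ n, 3 ≤ n → (∑ j ∈ Finset.Icc 3 n, |ϑ n j|) ≤ C3) ∧
        (∀ n i, 3 ≤ i → i ≤ n → (∑ j ∈ Finset.Icc i n, |ϑ j i|) ≤ C3) := by
  -- The stability polynomial exceeds the given one by `2 * R3 - 2 * R3 ^ 4`.
  have hR3 : R3 < R3 ^ 4 := lt_self_pow₀ (one_lt_of_bdf3_root hR3pos hR3root) (by norm_num)
  obtain ⟨C, hC, hbound⟩ := bdf3_doc_bounded_general hR3pos (by linarith)
  refine ⟨C, hC, fun r hr ϑ hdiag hoffDiag => ?_⟩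
  obtain ⟨hrow, hcol⟩ :=
    hbound r (fun k hk => ⟨(hr k hk).1, (hr k hk).2.trans hR'.le⟩) ϑ ⟨hdiag, hoffDiag⟩
  exact ⟨fun n _ => hrow n, fun n i hi _ => hcol n i hi⟩
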